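/- Let λ ≥ 1, δ ∈ (0, 1], and let ξ, η ∈ ℝ³ (Euclidean) satisfy ‖ξ‖ = ‖η‖ = λ, w := ξ + η, with 0 < ‖w‖ ≤ λ^(1−δ). Let v ∈ ℝ³ be a unit vector with ⟪v, ξ⟫ = 0 and ⟪v, η⟫ = 0, let ω(a,b) = ‖a‖ + ‖b‖ − ‖a+b‖, and let H be the second Fréchet derivative of ω at (ξ, η). Then H((v,−v),(v,−v)) = 2/λ > 0, H((v,v),(v,v)) ≤ −2·λ^(−1+δ) < 0, and consequently H((v,−v),(v,−v)) · |H((v,v),(v,v))| ≥ 4·λ^(−2+δ). -/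

import Mathlib

/-!
The Hessian of the norm at `x ≠ 0` is `(Id - x xᵀ / ‖x‖²) / ‖x‖`, so in a direction `m ⟂ x` its
value is `‖m‖² / ‖x‖`. Each summand of the phase is a norm composed with a linear map (`p.1`, `p.2`
or `p.1 + p.2`), and since `v` is orthogonal to `ξ`, `η` and hence `ξ + η`, this applies to all
three. It gives `H((v,s v),(v,s v)) = (1 + s²)/λ - (1 + s)²/‖ξ + η‖`, that is `2/λ` for `s = -1`
and `2/λ - 4/‖ξ + η‖` for `s = 1`. The bounds then follow from
`1/‖ξ + η‖ ≥ λ^(-1+δ) ≥ λ⁻¹`.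
-/

open scoped RealInnerProductSpace

section NormHessian

variable {E F : Type*} [NormedAddCommGroup E] [NormedSpace ℝ E]
  [NormedAddCommGroup F] [InnerProductSpace ℝ F]

lemma hasFDerivAt_norm_clm (L : E →L[ℝ] F) {y : E} (hy : L y ≠ 0) :
    HasFDerivAt (fun p => ‖L p‖) (‖L y‖⁻¹ • (innerSL ℝ (L y)).comp L) y := by
  have h := (L.hasFDerivAt (x := y)).norm_sq.sqrt (by simpa using hy)
  have hf : (fun p => √(‖L p‖ ^ 2)) = fun p => ‖L p‖ :=
    funext fun p => Real.sqrt_sq (norm_nonneg _)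
  have hn : ‖L y‖ ≠ 0 := norm_ne_zero_iff.2 hy
  rw [hf, Real.sqrt_sq (norm_nonneg _)] at h
  convert! h using 1
  ext m
  simp
  field_simp

/-- In a direction mapped by `L` orthogonally to `L x`, the second derivative of `‖L ·‖` has no
radial contribution and equals `‖L m‖² / ‖L x‖`. -/
lemma iteratedFDeriv_two_norm_clm (L : E →L[ℝ] F) {x m : E} (hx : L x ≠ 0)
    (hm : ⟪L x, L m⟫ = 0) :
    iteratedFDeriv ℝ 2 (fun p => ‖L p‖) x ![m, m] = ‖L m‖ ^ 2 / ‖L x‖ := by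
  have hC : ContDiffAt ℝ 2 (fun p => ‖L p‖) x := L.contDiff.contDiffAt.norm ℝ hx
  have hD : DifferentiableAt ℝ (fderiv ℝ fun p => ‖L p‖) x :=
    (hC.fderiv_right (m := 1) (by norm_num)).differentiableAt (by norm_num)
  have h1 := hD.hasFDerivAt.clm_apply (hasFDerivAt_const m x)
  have hev : (fun y => fderiv ℝ (fun p => ‖L p‖) y m) =ᶠ[nhds x]
      fun y => ‖L y‖⁻¹ * ⟪L y, L m⟫ := by
    filter_upwards [L.continuous.continuousAt.eventually_ne hx] with y hy
    rw [(hasFDerivAt_norm_clm L hy).fderiv]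
    simp
  have h2 := ((hasDerivAt_inv (norm_ne_zero_iff.2 hx)).comp_hasFDerivAt x
    (hasFDerivAt_norm_clm L hx)).mul
    ((L.hasFDerivAt (x := x)).inner ℝ (hasFDerivAt_const (L m) x))
  have h3 := DFunLike.congr_fun (h1.unique (h2.congr_of_eventuallyEq hev)) m
  rw [iteratedFDeriv_two_apply]
  simp [hm] at h3
  simp [h3]
  ring

/-- The Hessian of `(a, b) ↦ ‖a‖ + ‖b‖ - ‖a + b‖` in a direction `(u, t)` whose components are
orthogonal to the corresponding base vectors. -/
lemma iteratedFDeriv_two_phase {a b u t : F} (ha : a ≠ 0) (hb : b ≠ 0) (hab : a + b ≠ 0)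
    (hau : ⟪a, u⟫ = 0) (hbt : ⟪b, t⟫ = 0) (habut : ⟪a + b, u + t⟫ = 0) :
    iteratedFDeriv ℝ 2 (fun p : F × F => ‖p.1‖ + ‖p.2‖ - ‖p.1 + p.2‖) (a, b) ![(u, t), (u, t)]
      = ‖u‖ ^ 2 / ‖a‖ + ‖t‖ ^ 2 / ‖b‖ - ‖u + t‖ ^ 2 / ‖a + b‖ := by
  let L₁ := ContinuousLinearMap.fst ℝ F F
  let L₂ := ContinuousLinearMap.snd ℝ F F
  have c₁ : ContDiffAt ℝ (2 : ℕ) (fun p => ‖L₁ p‖) (a, b) := L₁.contDiff.contDiffAt.norm ℝ ha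
  have c₂ : ContDiffAt ℝ (2 : ℕ) (fun p => ‖L₂ p‖) (a, b) := L₂.contDiff.contDiffAt.norm ℝ hb
  have c₃ : ContDiffAt ℝ (2 : ℕ) (fun p => ‖(L₁ + L₂) p‖) (a, b) :=
    (L₁ + L₂).contDiff.contDiffAt.norm ℝ hab
  have e₁ := iteratedFDeriv_two_norm_clm L₁ (x := (a, b)) (m := (u, t)) ha hau
  have e₂ := iteratedFDeriv_two_norm_clm L₂ (x := (a, b)) (m := (u, t)) hb hbt
  have e₃ := iteratedFDeriv_two_norm_clm (L₁ + L₂) (x := (a, b)) (m := (u, t)) hab habut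
  change iteratedFDeriv ℝ 2 (fun p => ‖L₁ p‖ + ‖L₂ p‖ - ‖(L₁ + L₂) p‖)
    (a, b) ![(u, t), (u, t)] = _
  rw [fun_iteratedFDeriv_sub_apply (c₁.add c₂) c₃, fun_iteratedFDeriv_add_apply c₁ c₂]
  rw [sub_apply, add_apply, e₁, e₂, e₃]
  rfl

end NormHessian

/-- Lemma F.1 (nondegeneracy of the two-dimensional Hessian of the phase): in the
resonant strip `0 < ‖ξ+η‖ ≤ λ^(1−δ)` with `‖ξ‖ = ‖η‖ = λ ≥ 1`, `δ ∈ (0,1]`, and a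
unit vector `v ⟂ ξ, η`, the Hessian `H` of `ω(a,b) = ‖a‖+‖b‖−‖a+b‖` at `(ξ,η)`
satisfies `H((v,−v),(v,−v)) = 2/λ > 0`, `H((v,v),(v,v)) ≤ −2·λ^(−1+δ) < 0`, and
`H((v,−v),(v,−v)) · |H((v,v),(v,v))| ≥ 4·λ^(−2+δ)`. -/
theorem phase_hessian_lower_bound (lam δ : ℝ) (hlam : 1 ≤ lam)
    (hδ0 : 0 < δ) (hδ1 : δ ≤ 1)
    (ξ η : EuclideanSpace ℝ (Fin 3)) (hξ : ‖ξ‖ = lam) (hη : ‖η‖ = lam)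
    (hw0 : 0 < ‖ξ + η‖) (hw : ‖ξ + η‖ ≤ lam ^ (1 - δ))
    (v : EuclideanSpace ℝ (Fin 3)) (hv : ‖v‖ = 1)
    (hvξ : ⟪v, ξ⟫ = 0) (hvη : ⟪v, η⟫ = 0) :
    (iteratedFDeriv ℝ 2
        (fun p : EuclideanSpace ℝ (Fin 3) × EuclideanSpace ℝ (Fin 3) =>
          ‖p.1‖ + ‖p.2‖ - ‖p.1 + p.2‖) (ξ, η)) ![(v, -v), (v, -v)] = 2 / lam ∧
    0 < 2 / lam ∧
    (iteratedFDeriv ℝ 2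
        (fun p : EuclideanSpace ℝ (Fin 3) × EuclideanSpace ℝ (Fin 3) =>
          ‖p.1‖ + ‖p.2‖ - ‖p.1 + p.2‖) (ξ, η)) ![(v, v), (v, v)]
      ≤ -2 * lam ^ (-1 + δ) ∧
    (iteratedFDeriv ℝ 2
        (fun p : EuclideanSpace ℝ (Fin 3) × EuclideanSpace ℝ (Fin 3) =>
          ‖p.1‖ + ‖p.2‖ - ‖p.1 + p.2‖) (ξ, η)) ![(v, v), (v, v)] < 0 ∧
    (iteratedFDeriv ℝ 2
          (fun p : EuclideanSpace ℝ (Fin 3) × EuclideanSpace ℝ (Fin 3) =>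
            ‖p.1‖ + ‖p.2‖ - ‖p.1 + p.2‖) (ξ, η)) ![(v, -v), (v, -v)]
        * |(iteratedFDeriv ℝ 2
            (fun p : EuclideanSpace ℝ (Fin 3) × EuclideanSpace ℝ (Fin 3) =>
              ‖p.1‖ + ‖p.2‖ - ‖p.1 + p.2‖) (ξ, η)) ![(v, v), (v, v)]|
      ≥ 4 * lam ^ (-2 + δ) := by
  have hl : 0 < lam := by linarith
  have hξ0 : ξ ≠ 0 := norm_pos_iff.1 (hξ ▸ hl)
  have hη0 : η ≠ 0 := norm_pos_iff.1 (hη ▸ hl)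
  have hξv : ⟪ξ, v⟫ = 0 := by rw [real_inner_comm]; exact hvξ
  have hηv : ⟪η, v⟫ = 0 := by rw [real_inner_comm]; exact hvη
  have hm : (iteratedFDeriv ℝ 2
      (fun p : EuclideanSpace ℝ (Fin 3) × EuclideanSpace ℝ (Fin 3) =>
        ‖p.1‖ + ‖p.2‖ - ‖p.1 + p.2‖) (ξ, η)) ![(v, -v), (v, -v)] = 2 / lam := by
    rw [iteratedFDeriv_two_phase hξ0 hη0 (norm_pos_iff.1 hw0) hξv (by simp [hηv]) (by simp),
      norm_neg, hv, hξ, hη, add_neg_cancel, norm_zero]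
    ring
  have hp : (iteratedFDeriv ℝ 2
      (fun p : EuclideanSpace ℝ (Fin 3) × EuclideanSpace ℝ (Fin 3) =>
        ‖p.1‖ + ‖p.2‖ - ‖p.1 + p.2‖) (ξ, η)) ![(v, v), (v, v)] = 2 / lam - 4 / ‖ξ + η‖ := by
    have h2v : ‖v + v‖ = 2 := by rw [← two_smul ℝ v, norm_smul, hv]; norm_num
    rw [iteratedFDeriv_two_phase hξ0 hη0 (norm_pos_iff.1 hw0) hξv hηv
      (by simp [inner_add_left, inner_add_right, hξv, hηv]), hv, h2v, hξ, hη]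
    ring
  have hpow : 0 < lam ^ (-1 + δ) := Real.rpow_pos_of_pos hl _
  have hinv : lam⁻¹ ≤ lam ^ (-1 + δ) := by
    rw [← Real.rpow_neg_one]
    exact Real.rpow_le_rpow_of_exponent_le hlam (by linarith)
  have hwinv : lam ^ (-1 + δ) ≤ ‖ξ + η‖⁻¹ := by
    rw [show -1 + δ = -(1 - δ) by ring, Real.rpow_neg hl.le]
    exact inv_anti₀ hw0 hw
  have hle : 2 / lam - 4 / ‖ξ + η‖ ≤ -2 * lam ^ (-1 + δ) := by
    rw [div_eq_mul_inv, div_eq_mul_inv]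
    linarith
  have hneg : 2 / lam - 4 / ‖ξ + η‖ < 0 := by linarith
  rw [hm, hp]
  refine ⟨rfl, by positivity, hle, hneg, ?_⟩
  have hprod : 4 * lam ^ (-2 + δ) = 2 / lam * (2 * lam ^ (-1 + δ)) := by
    rw [show -2 + δ = -1 + (-1 + δ) by ring, Real.rpow_add hl, Real.rpow_neg_one]
    ring
  rw [abs_of_neg hneg, hprod]
  exact mul_le_mul_of_nonneg_left (by linarith) (by positivity)
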